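/- If A and B are distinct isomorphic subalgebras of the crystal lattice C and φ : A → B is an isomorphism (a bijection preserving ∧, ∨, ¬, and ·), then the pair {A, B} is one of the pairs {{a},{b}}, {{⊥,a,⊤},{⊥,b,⊤}}, or {{⊥,t,a,f,⊤},{⊥,t,b,f,⊤}}, and φ maps a to b (or b to a, respectively) and fixes every element of A ∩ {⊥, t, f, ⊤}. -/

import Mathlib

/-- The universe of the crystal lattice `C`: six elements `⊥, t, a, b, f, ⊤`. -/
inductive Cry : Type
  | bot | t | a | b | f | top
  deriving DecidableEq

namespace Cry

/-- The lattice order of `C`: `⊥ < t < a < f < ⊤` and `t < b < f`, with `a, b` incomparable. -/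
def leb : Cry → Cry → Bool
  | bot, _ => true
  | _, top => true
  | t, bot => false
  | t, _ => true
  | a, a => true
  | a, f => true
  | a, _ => false
  | b, b => true
  | b, f => true
  | b, _ => false
  | f, f => true
  | f, _ => false
  | top, _ => false

/-- Meet: the only incomparable pair is `{a, b}`, whose meet is `t`. -/
def meet (x y : Cry) : Cry := if leb x y then x else if leb y x then y else t

/-- Join: the only incomparable pair is `{a, b}`, whose join is `f`. -/
def join (x y : Cry) : Cry := if leb x y then y else if leb y x then x else f

/-- The involution `¬`. -/
def neg : Cry → Cry
  | bot => top
  | t => f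
  | a => a
  | b => b
  | f => t
  | top => bot

/-- Fusion `·`: commutative with identity `t`; `⊥·x = ⊥`; `⊤·x = ⊤` for `x ≠ ⊥`;
`a·a = a`; `b·b = b`; and `a·b = a·f = b·f = f·f = ⊤`. -/
def fus : Cry → Cry → Cry
  | bot, _ => bot
  | _, bot => bot
  | top, _ => top
  | _, top => top
  | t, x => x
  | x, t => x
  | a, a => a
  | b, b => b
  | _, _ => top

/-- A subalgebra of `C`: a nonempty subset closed under `∧`, `∨`, `·`, and `¬`. -/
def IsSubalg (S : Set Cry) : Prop :=
  S.Nonempty ∧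
  (∀ x ∈ S, ∀ y ∈ S, meet x y ∈ S ∧ join x y ∈ S ∧ fus x y ∈ S) ∧
  (∀ x ∈ S, neg x ∈ S)

/-- A congruence on the subset `S` (with the operations inherited from `C`):
an equivalence relation on `S` compatible with `∧`, `∨`, `·`, and `¬`. -/
def IsCongOn (S : Set Cry) (r : Cry → Cry → Prop) : Prop :=
  (∀ x ∈ S, r x x) ∧
  (∀ x ∈ S, ∀ y ∈ S, r x y → r y x) ∧
  (∀ x ∈ S, ∀ y ∈ S, ∀ z ∈ S, r x y → r y z → r x z) ∧
  (∀ x ∈ S, ∀ y ∈ S, ∀ u ∈ S, ∀ v ∈ S, r x y → r u v →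
      r (meet x u) (meet y v) ∧ r (join x u) (join y v) ∧ r (fus x u) (fus y v)) ∧
  (∀ x ∈ S, ∀ y ∈ S, r x y → r (neg x) (neg y))

end Cry

/-- An isomorphism from the subalgebra `A` onto the subalgebra `B`: a bijection of `A`
onto `B` preserving the restricted operations `∧`, `∨`, `·`, and `¬`. -/
def Cry.IsIso (A B : Set Cry) (φ : Cry → Cry) : Prop :=
  (∀ x ∈ A, φ x ∈ B) ∧
  (∀ x ∈ A, ∀ y ∈ A, φ x = φ y → x = y) ∧
  (∀ y ∈ B, ∃ x ∈ A, φ x = y) ∧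
  (∀ x ∈ A, ∀ y ∈ A, φ (Cry.meet x y) = Cry.meet (φ x) (φ y) ∧
      φ (Cry.join x y) = Cry.join (φ x) (φ y) ∧ φ (Cry.fus x y) = Cry.fus (φ x) (φ y)) ∧
  (∀ x ∈ A, φ (Cry.neg x) = Cry.neg (φ x))

/-!
The elements `⊥, t, f, ⊤` are those moved by `¬`, and each is determined by the truth values of
`x ∧ ¬x = x` and `x · ¬x = x`, which isomorphisms preserve; so an isomorphism `φ : A → B` fixes
them. It sends `a` and `b` to fixed points of `¬`, that is into `{a, b}`, so by injectivity it
agrees on `A` either with the identity or with the transposition `(a b)`. If `A ≠ B` it must be the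
latter, and `A` contains exactly one of `a, b`; closure under the operations then leaves three
possibilities for the rest of `A`.
-/

namespace Cry

open Equiv (swap)

variable {A B : Set Cry} {φ : Cry → Cry} {x y : Cry}

theorem neg_eq_self_iff : neg x = x ↔ x = a ∨ x = b := by
  cases x <;> decide

theorem swap_apply_of_neg_ne_self (hx : neg x ≠ x) : swap a b x = x := by
  rw [Ne, neg_eq_self_iff, not_or] at hx
  exact Equiv.swap_apply_of_ne_of_ne hx.1 hx.2

theorem eq_or_eq_swap_apply_of_neg_eq_self (hx : neg x = x) (hy : neg y = y) :
    y = x ∨ y = swap a b x := by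
  rcases neg_eq_self_iff.mp hx with rfl | rfl <;> rcases neg_eq_self_iff.mp hy with rfl | rfl <;>
    decide

-- `x ≤ ¬x` holds for `⊥, t` but not `f, ⊤`, and `x·¬x = x` holds for `⊥, f` but not `t, ⊤`.
theorem eq_of_meet_neg_iff_of_fus_neg_iff (hx : neg x ≠ x) (hy : neg y ≠ y)
    (hmeet : meet x (neg x) = x ↔ meet y (neg y) = y)
    (hfus : fus x (neg x) = x ↔ fus y (neg y) = y) : x = y := by
  revert hx hy hmeet hfus
  cases x <;> cases y <;> decide

namespace IsSubalg

theorem neg_mem (hA : IsSubalg A) (hx : x ∈ A) : neg x ∈ A :=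
  hA.2.2 x hx

theorem meet_mem (hA : IsSubalg A) (hx : x ∈ A) (hy : y ∈ A) : meet x y ∈ A :=
  (hA.2.1 x hx y hy).1

theorem fus_mem (hA : IsSubalg A) (hx : x ∈ A) (hy : y ∈ A) : fus x y ∈ A :=
  (hA.2.1 x hx y hy).2.2

theorem top_mem_iff (hA : IsSubalg A) : top ∈ A ↔ bot ∈ A :=
  ⟨hA.neg_mem, hA.neg_mem⟩

theorem f_mem_iff (hA : IsSubalg A) : f ∈ A ↔ t ∈ A :=
  ⟨hA.neg_mem, hA.neg_mem⟩

theorem bot_mem_of_t_mem (hA : IsSubalg A) (ht : t ∈ A) : bot ∈ A :=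
  have hf : f ∈ A := hA.f_mem_iff.mpr ht
  hA.top_mem_iff.mp (hA.fus_mem hf hf)

theorem eq_of_a_mem_of_b_notMem (hA : IsSubalg A) (ha : a ∈ A) (hb : b ∉ A) :
    A = {a} ∨ A = {bot, a, top} ∨ A = {bot, t, a, f, top} := by
  have htop := hA.top_mem_iff
  have hf := hA.f_mem_iff
  by_cases hbot : bot ∈ A
  · by_cases ht : t ∈ A
    · right; right
      ext x; cases x <;> simp_all
    · right; left
      ext x; cases x <;> simp_all
  · have ht : t ∉ A := mt hA.bot_mem_of_t_mem hbot
    left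
    ext x; cases x <;> simp_all

theorem pair_image_swap_eq (hA : IsSubalg A) (ha : a ∈ A) (hb : b ∉ A) :
    ({A, swap a b '' A} : Set (Set Cry)) = {{a}, {b}} ∨
    ({A, swap a b '' A} : Set (Set Cry)) = {{bot, a, top}, {bot, b, top}} ∨
    ({A, swap a b '' A} : Set (Set Cry)) = {{bot, t, a, f, top}, {bot, t, b, f, top}} := by
  have hbot : swap a b bot = bot := swap_apply_of_neg_ne_self (by decide)
  have ht : swap a b t = t := swap_apply_of_neg_ne_self (by decide)
  have hf : swap a b f = f := swap_apply_of_neg_ne_self (by decide)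
  have htop : swap a b top = top := swap_apply_of_neg_ne_self (by decide)
  refine (hA.eq_of_a_mem_of_b_notMem ha hb).imp ?_ (Or.imp ?_ ?_) <;> rintro rfl <;>
    simp only [Set.image_insert_eq, Set.image_singleton, Equiv.swap_apply_left, hbot, ht, hf, htop]

end IsSubalg

namespace IsIso

theorem image_eq (hφ : IsIso A B φ) : φ '' A = B :=
  Set.Subset.antisymm (Set.image_subset_iff.mpr hφ.1) hφ.2.2.1

theorem map_eq_map_iff (hφ : IsIso A B φ) (hx : x ∈ A) (hy : y ∈ A) : φ x = φ y ↔ x = y :=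
  ⟨hφ.2.1 x hx y hy, congrArg φ⟩

theorem map_neg (hφ : IsIso A B φ) (hx : x ∈ A) : φ (neg x) = neg (φ x) :=
  hφ.2.2.2.2 x hx

theorem map_meet (hφ : IsIso A B φ) (hx : x ∈ A) (hy : y ∈ A) :
    φ (meet x y) = meet (φ x) (φ y) :=
  (hφ.2.2.2.1 x hx y hy).1

theorem map_fus (hφ : IsIso A B φ) (hx : x ∈ A) (hy : y ∈ A) :
    φ (fus x y) = fus (φ x) (φ y) :=
  (hφ.2.2.2.1 x hx y hy).2.2

theorem neg_map_eq_self_iff (hφ : IsIso A B φ) (hA : IsSubalg A) (hx : x ∈ A) :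
    neg (φ x) = φ x ↔ neg x = x := by
  rw [← hφ.map_neg hx, hφ.map_eq_map_iff (hA.neg_mem hx) hx]

theorem meet_neg_map_eq_self_iff (hφ : IsIso A B φ) (hA : IsSubalg A) (hx : x ∈ A) :
    meet (φ x) (neg (φ x)) = φ x ↔ meet x (neg x) = x := by
  have hnx := hA.neg_mem hx
  rw [← hφ.map_neg hx, ← hφ.map_meet hx hnx, hφ.map_eq_map_iff (hA.meet_mem hx hnx) hx]

theorem fus_neg_map_eq_self_iff (hφ : IsIso A B φ) (hA : IsSubalg A) (hx : x ∈ A) :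
    fus (φ x) (neg (φ x)) = φ x ↔ fus x (neg x) = x := by
  have hnx := hA.neg_mem hx
  rw [← hφ.map_neg hx, ← hφ.map_fus hx hnx, hφ.map_eq_map_iff (hA.fus_mem hx hnx) hx]

theorem map_eq_self_of_neg_ne_self (hφ : IsIso A B φ) (hA : IsSubalg A) (hx : x ∈ A)
    (hneg : neg x ≠ x) : φ x = x :=
  eq_of_meet_neg_iff_of_fus_neg_iff ((hφ.neg_map_eq_self_iff hA hx).not.mpr hneg) hneg
    (hφ.meet_neg_map_eq_self_iff hA hx) (hφ.fus_neg_map_eq_self_iff hA hx)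

theorem eqOn_id_or_eqOn_swap (hφ : IsIso A B φ) (hA : IsSubalg A) :
    Set.EqOn φ id A ∨ Set.EqOn φ (swap a b) A := by
  refine or_iff_not_imp_left.mpr fun hid y hy ↦ ?_
  obtain ⟨x, hx, hφx⟩ : ∃ x ∈ A, φ x ≠ x := by
    simpa only [Set.EqOn, id, not_forall, exists_prop] using hid
  have hnx : neg x = x := not_not.mp (mt (hφ.map_eq_self_of_neg_ne_self hA hx) hφx)
  have map_x : φ x = swap a b x :=
    (eq_or_eq_swap_apply_of_neg_eq_self hnx
      ((hφ.neg_map_eq_self_iff hA hx).mpr hnx)).resolve_left hφx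
  by_cases hny : neg y = y
  · rcases eq_or_eq_swap_apply_of_neg_eq_self hnx hny with rfl | rfl
    · exact map_x
    · have hne : φ (swap a b x) ≠ swap a b x := by
        rw [← map_x, Ne, hφ.map_eq_map_iff (map_x ▸ hy) hx]
        exact hφx
      exact (eq_or_eq_swap_apply_of_neg_eq_self hny
        ((hφ.neg_map_eq_self_iff hA hy).mpr hny)).resolve_left hne
  · rw [hφ.map_eq_self_of_neg_ne_self hA hy hny, swap_apply_of_neg_ne_self hny]

theorem eqOn_swap_of_ne (hφ : IsIso A B φ) (hA : IsSubalg A) (hne : A ≠ B) :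
    Set.EqOn φ (swap a b) A :=
  (hφ.eqOn_id_or_eqOn_swap hA).resolve_left fun hid ↦
    hne (by rw [← hφ.image_eq, hid.image_eq, Set.image_id])

end IsIso

end Cry

/-- Distinct isomorphic subalgebras of `C` come from one of three pairs, and any
isomorphism between them swaps `a` and `b` and fixes the common part `{⊥, t, f, ⊤}`. -/
theorem distinct_isomorphic_subalgebras (A B : Set Cry)
    (hA : Cry.IsSubalg A) (hB : Cry.IsSubalg B) (hne : A ≠ B)
    (φ : Cry → Cry) (hφ : Cry.IsIso A B φ) :
    (({A, B} : Set (Set Cry)) = {{Cry.a}, {Cry.b}} ∨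
     ({A, B} : Set (Set Cry)) =
        {{Cry.bot, Cry.a, Cry.top}, {Cry.bot, Cry.b, Cry.top}} ∨
     ({A, B} : Set (Set Cry)) =
        {{Cry.bot, Cry.t, Cry.a, Cry.f, Cry.top}, {Cry.bot, Cry.t, Cry.b, Cry.f, Cry.top}}) ∧
    (Cry.a ∈ A → φ Cry.a = Cry.b) ∧
    (Cry.b ∈ A → φ Cry.b = Cry.a) ∧
    (∀ x ∈ A ∩ ({Cry.bot, Cry.t, Cry.f, Cry.top} : Set Cry), φ x = x) := by
  have hswap := hφ.eqOn_swap_of_ne hA hne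
  have hBA : B = Equiv.swap Cry.a Cry.b '' A := by rw [← hφ.image_eq, hswap.image_eq]
  have hAB : A = Equiv.swap Cry.a Cry.b '' B := by
    rw [← (Equiv.eq_image_iff_symm_image_eq _ _ _).mp hBA, Equiv.symm_swap]
  have hxor : Xor (Cry.a ∈ A) (Cry.b ∈ A) := by
    refine (xor_iff_not_iff _ _).mpr fun hab ↦ hne ?_
    rw [hBA, (Equiv.swap_bijOn_self hab).image_eq]
  refine ⟨?_, fun ha ↦ ?_, fun hb ↦ ?_, fun x hx ↦ ?_⟩
  · rcases hxor with ⟨ha, hb⟩ | ⟨hb, ha⟩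
    · rw [hBA]
      exact hA.pair_image_swap_eq ha hb
    · have haB : Cry.a ∈ B := hBA ▸ ⟨Cry.b, hb, Equiv.swap_apply_right _ _⟩
      have hbB : Cry.b ∉ B := fun hbB ↦ ha (hAB ▸ ⟨Cry.b, hbB, Equiv.swap_apply_right _ _⟩)
      rw [Set.pair_comm, hAB]
      exact hB.pair_image_swap_eq haB hbB
  · rw [hswap ha, Equiv.swap_apply_left]
  · rw [hswap hb, Equiv.swap_apply_right]
  · refine hφ.map_eq_self_of_neg_ne_self hA hx.1 ?_
    rcases hx.2 with rfl | rfl | rfl | rfl <;> decide
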